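/- arXiv:2301.03120 — 2 statements merged into one kernel-verified Lean document; each statement's English description precedes it below -/
import Mathlib

section
/- Let ((n_1, K, d_1))_{D_1} and ((n_2, K, d_2))_{D_2} be two QMDS codes with the same code-space dimension K > 1, i.e., K-dimensional r_1-uniform and r_2-uniform subspaces of (C^{D_1})^{⊗n_1} and (C^{D_2})^{⊗n_2} respectively, where r_1 = d_1 − 1, r_2 = d_2 − 1, K = D_1^{n_1−2r_1} = D_2^{n_2−2r_2}. Then there exists an l-uniform unit vector in the (n_1+n_2)-partite space (C^{D_1})^{⊗n_1} ⊗ (C^{D_2})^{⊗n_2} with l = min(n_1 − r_1, n_2 − r_2, r_1 + r_2 + 1). Explicitly, if V_1, V_2 are isometries from C^K onto the two code spaces and φ ∈ C^K ⊗ C^K is any maximally entangled state, then (V_1 ⊗ V_2)φ is such an l-uniform state. -/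
/-!
Common definitions: multipartite systems with parties indexed by a finite type `ι`,
local dimensions `d : ι → ℕ`, vectors as functions on the configuration space,
partial traces, and `r`-uniform states and subspaces.
-/

open scoped ComplexConjugate Matrix

namespace RUnif

variable {ι : Type} [Fintype ι] [DecidableEq ι]

/-- Configuration space (computational basis index set) of the multipartite system
`ℂ^{d i₁} ⊗ ... ⊗ ℂ^{d iₙ}`. -/
abbrev Cfg (d : ι → ℕ) : Type := ∀ i, Fin (d i)

/-- The multipartite Hilbert space `ℂ^{d i₁} ⊗ ... ⊗ ℂ^{d iₙ}`, realized as functions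
on the configuration space. -/
abbrev H (d : ι → ℕ) : Type := Cfg d → ℂ

/-- The standard hermitian inner product `⟪φ, ψ⟫`. -/
noncomputable def dotc (d : ι → ℕ) (φ ψ : H d) : ℂ :=
  ∑ x, conj (φ x) * ψ x

/-- The rank-one operator `|ψ⟩⟨φ|` as a matrix. -/
noncomputable def dyad (d : ι → ℕ) (ψ φ : H d) : Matrix (Cfg d) (Cfg d) ℂ :=
  Matrix.of fun x y => ψ x * conj (φ y)

/-- Configurations of the parties inside `S`. -/
abbrev SubCfg (d : ι → ℕ) (S : Finset ι) : Type := ∀ i : S, Fin (d i.1)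

/-- Configurations of the parties outside `S`. -/
abbrev CoCfg (d : ι → ℕ) (S : Finset ι) : Type := ∀ i : {j : ι // j ∉ S}, Fin (d i.1)

/-- Merge a configuration of the parties in `S` with one of the parties outside `S`. -/
def merge (d : ι → ℕ) (S : Finset ι) (a : SubCfg d S) (c : CoCfg d S) : Cfg d :=
  fun i => if h : i ∈ S then a ⟨i, h⟩ else c ⟨i, h⟩

/-- Partial trace over the parties *outside* `S` (i.e. `Tr_{Sᶜ}`), leaving an operator
on the parties in `S`. -/
noncomputable def ptr (d : ι → ℕ) (S : Finset ι) (M : Matrix (Cfg d) (Cfg d) ℂ) :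
    Matrix (SubCfg d S) (SubCfg d S) ℂ :=
  Matrix.of fun a b => ∑ c : CoCfg d S, M (merge d S a c) (merge d S b c)

/-- The maximally mixed state `(1/d_S) I_S` on the parties in `S`. -/
noncomputable def unifMix (d : ι → ℕ) (S : Finset ι) :
    Matrix (SubCfg d S) (SubCfg d S) ℂ :=
  (∏ i : S, (d i.1 : ℂ))⁻¹ • 1

/-- `ψ` is a unit vector. -/
def IsUnitVec (d : ι → ℕ) (ψ : H d) : Prop := dotc d ψ ψ = 1

/-- `ψ` is `r`-uniform: every reduction to `r` parties is maximally mixed. -/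
def IsUniform (d : ι → ℕ) (r : ℕ) (ψ : H d) : Prop :=
  ∀ S : Finset ι, S.card = r → ptr d S (dyad d ψ ψ) = unifMix d S

/-- A subspace is `r`-uniform if every unit vector in it is an `r`-uniform state. -/
def IsUniformSubspace (d : ι → ℕ) (r : ℕ) (W : Submodule ℂ (H d)) : Prop :=
  ∀ ψ ∈ W, IsUnitVec d ψ → IsUniform d r ψ

end RUnif

open scoped Finset

/-!
The operators whose marginal on `S` is a multiple of the identity form a subspace. For an
`r`-uniform code and `#S ≤ r`, polarization puts every `|u⟩⟨v|` with `u, v` code vectors in it.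

Let `V` encode a QMDS code and cut the parties into `S` with `#S = r` and its complement. Read as a
matrix from `Sᶜ` to `S` together with the logical index, `V` has orthogonal rows of equal norm by
uniformity, and it is square because the Singleton bound is attained. Hence its columns are
orthogonal too, which says that the code projector `V Vᴴ` is maximally mixed on `Sᶜ`, and so on any
`n - r` parties.

If `#S ≤ r₁ + r₂ + 1`, then `S` contains at most `r₁` parties of the first code or at most `r₂` of
the second. In the first case, tracing out the rest of the first code kills the off-diagonal terms
`|u_a⟩⟨u_b|`, and the maximal entanglement leaves the code projector of the second code, which is
maximally mixed on the at most `n₂ - r₂` parties in question.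
-/

namespace RUnif

section Piecewise

theorem sum_sum_piecewise {ι M : Type*} {π : ι → Type*} [Fintype (∀ i, π i)] [DecidableEq ι]
    [AddCommMonoid M] (T : Finset ι) (f : (∀ i, π i) → M) :
    ∑ x, ∑ z, f (T.piecewise x z) = Fintype.card (∀ i, π i) • ∑ x, f x := by
  have swap_involutive : Function.Involutive fun p : (∀ i, π i) × (∀ i, π i) =>
      (T.piecewise p.1 p.2, T.piecewise p.2 p.1) := fun p => by
    ext i <;> by_cases hi : i ∈ T <;> simp [hi]
  calc ∑ x, ∑ z, f (T.piecewise x z)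
      = ∑ p : (∀ i, π i) × (∀ i, π i), f (T.piecewise p.1 p.2) :=
        (Fintype.sum_prod_type' fun x z => f (T.piecewise x z)).symm
    _ = ∑ p : (∀ i, π i) × (∀ i, π i), f p.1 :=
        Fintype.sum_bijective _ swap_involutive.bijective _ _ fun _ => rfl
    _ = Fintype.card (∀ i, π i) • ∑ x, f x := by
        simp only [Fintype.sum_prod_type_right, Finset.sum_const, Finset.card_univ]

theorem piecewise_piecewise_of_subset {ι : Type*} {π : ι → Sort*} [DecidableEq ι]
    {S T : Finset ι} (hST : S ⊆ T) (x z w : ∀ i, π i) :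
    T.piecewise (S.piecewise x z) w = S.piecewise x (T.piecewise z w) := by
  ext i
  by_cases hS : i ∈ S
  · simp [hS, hST hS]
  · by_cases hT : i ∈ T <;> simp [hS, hT]

end Piecewise

section Matrix

theorem mul_eq_smul_one_comm {m n R : Type*} [Fintype m] [DecidableEq m] [Fintype n]
    [DecidableEq n] [Field R] {A : Matrix m n R} {B : Matrix n m R} {c : R} (hc : c ≠ 0)
    (hcard : Fintype.card m = Fintype.card n) (h : A * B = c • 1) : B * A = c • 1 := by
  have hinv : A * (c⁻¹ • B) = 1 := by rw [Matrix.mul_smul, h, inv_smul_smul₀ hc]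
  rw [Matrix.mul_eq_one_comm_of_card_eq _ _ _ hcard, Matrix.smul_mul] at hinv
  exact (inv_smul_eq_iff₀ hc).1 hinv

end Matrix

section Merge

variable {ι : Type} [DecidableEq ι] {d : ι → ℕ} (S : Finset ι)

theorem restrict_merge (a : SubCfg d S) (c : CoCfg d S) : S.restrict (merge d S a c) = a := by
  ext i
  simp [merge]

theorem piecewise_merge (x : Cfg d) (a : SubCfg d S) (c : CoCfg d S) :
    S.piecewise x (merge d S a c) = merge d S (S.restrict x) c := by
  ext i
  by_cases hi : i ∈ S <;> simp [merge, hi]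

theorem compl_piecewise_merge [Fintype ι] (x : Cfg d) (a : SubCfg d S) (c : CoCfg d S) :
    Sᶜ.piecewise x (merge d S a c) = merge d S a fun i => x i.1 := by
  ext i
  by_cases hi : i ∈ S <;> simp [merge, hi]

theorem sum_cfg_eq_sum_merge [Fintype ι] {M : Type*} [AddCommMonoid M] (f : Cfg d → M) :
    ∑ x, f x = ∑ a, ∑ c, f (merge d S a c) := by
  rw [← (Equiv.piEquivPiSubtypeProd (· ∈ S) fun i => Fin (d i)).symm.sum_comp,
    Fintype.sum_prod_type]
  rfl

theorem card_subCfg_ne_zero (x : Cfg d) : Fintype.card (SubCfg d S) ≠ 0 :=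
  have : Nonempty (SubCfg d S) := ⟨S.restrict x⟩
  Fintype.card_ne_zero

theorem unifMix_eq_inv_card_smul_one :
    unifMix d S = (Fintype.card (SubCfg d S) : ℂ)⁻¹ • 1 := by
  simp [unifMix]

end Merge

section Marginal

variable {ι : Type} [Fintype ι] [DecidableEq ι] (d : ι → ℕ) (S : Finset ι)

/-- The partial trace over the parties outside `S`, written on full configurations: up to the
factor `d_S` it is `Tr_{Sᶜ} M ⊗ J` with `J` the all-ones matrix on `Sᶜ`. All marginals then act
on the same space, so no dependent types appear when `S` varies. -/
def liftedPtr : Matrix (Cfg d) (Cfg d) ℂ →ₗ[ℂ] Matrix (Cfg d) (Cfg d) ℂ where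
  toFun M := Matrix.of fun x y => ∑ z, M (S.piecewise x z) (S.piecewise y z)
  map_add' M N := by
    ext x y
    simp only [Matrix.of_apply, Matrix.add_apply, Finset.sum_add_distrib]
  map_smul' c M := by
    ext x y
    simp only [Matrix.of_apply, Matrix.smul_apply, Finset.smul_sum, RingHom.id_apply]

/-- The matrix `I_S ⊗ J`, with `J` the all-ones matrix on the parties outside `S`: the `liftedPtr`
of a trace-one operator whose marginal on `S` is maximally mixed. -/
def agreeMatrix : Matrix (Cfg d) (Cfg d) ℂ :=
  Matrix.of fun x y => if ∀ i ∈ S, x i = y i then 1 else 0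

/-- The operators whose marginal on the parties in `S` is a multiple of the maximally mixed state;
see `mem_mixedOn_iff_ptr`. -/
noncomputable def mixedOn : Submodule ℂ (Matrix (Cfg d) (Cfg d) ℂ) :=
  LinearMap.eqLocus (liftedPtr d S)
    ((Matrix.traceLinearMap (Cfg d) ℂ ℂ).smulRight (agreeMatrix d S))

variable {d S}

theorem mem_mixedOn {M : Matrix (Cfg d) (Cfg d) ℂ} :
    M ∈ mixedOn d S ↔ liftedPtr d S M = M.trace • agreeMatrix d S := by
  simp [mixedOn]

theorem liftedPtr_apply (M : Matrix (Cfg d) (Cfg d) ℂ) (x y : Cfg d) :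
    liftedPtr d S M x y = ∑ z, M (S.piecewise x z) (S.piecewise y z) := rfl

theorem liftedPtr_apply_eq_card_mul_ptr (M : Matrix (Cfg d) (Cfg d) ℂ) (x y : Cfg d) :
    liftedPtr d S M x y =
      Fintype.card (SubCfg d S) * ptr d S M (S.restrict x) (S.restrict y) := by
  simp only [liftedPtr_apply, sum_cfg_eq_sum_merge S, piecewise_merge, Finset.sum_const,
    Finset.card_univ, nsmul_eq_mul, ptr, Matrix.of_apply]

theorem agreeMatrix_apply_eq_card_mul_unifMix (x y : Cfg d) :
    agreeMatrix d S x y =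
      Fintype.card (SubCfg d S) * unifMix d S (S.restrict x) (S.restrict y) := by
  have hcard : (Fintype.card (SubCfg d S) : ℂ) ≠ 0 :=
    Nat.cast_ne_zero.2 (card_subCfg_ne_zero S x)
  have hrestrict : S.restrict x = S.restrict y ↔ ∀ i ∈ S, x i = y i := by
    simp [funext_iff]
  simp only [agreeMatrix, Matrix.of_apply, unifMix_eq_inv_card_smul_one, Matrix.smul_apply,
    Matrix.one_apply, smul_eq_mul, mul_inv_cancel_left₀ hcard, hrestrict]

theorem mem_mixedOn_iff_ptr {M : Matrix (Cfg d) (Cfg d) ℂ} :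
    M ∈ mixedOn d S ↔ ptr d S M = M.trace • unifMix d S := by
  have entrywise (x y : Cfg d) : liftedPtr d S M x y = (M.trace • agreeMatrix d S) x y ↔
      ptr d S M (S.restrict x) (S.restrict y) =
        (M.trace • unifMix d S) (S.restrict x) (S.restrict y) := by
    rw [liftedPtr_apply_eq_card_mul_ptr, Matrix.smul_apply, Matrix.smul_apply,
      agreeMatrix_apply_eq_card_mul_unifMix, smul_eq_mul, smul_eq_mul, mul_left_comm]
    exact mul_right_inj' (Nat.cast_ne_zero.2 (card_subCfg_ne_zero S x))
  rw [mem_mixedOn]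
  refine ⟨fun h => ?_, fun h => Matrix.ext fun x y => (entrywise x y).2 (by rw [h])⟩
  ext a b
  rcases isEmpty_or_nonempty (CoCfg d S) with hempty | ⟨⟨c⟩⟩
  · have : IsEmpty (Cfg d) := ⟨fun x => hempty.elim fun i => x i.1⟩
    simp [ptr, Matrix.trace]
  · simpa only [restrict_merge] using
      (entrywise (merge d S a c) (merge d S b c)).1 (by rw [h])

theorem liftedPtr_liftedPtr_of_subset {T : Finset ι} (hST : S ⊆ T)
    (M : Matrix (Cfg d) (Cfg d) ℂ) :
    liftedPtr d S (liftedPtr d T M) = (Fintype.card (Cfg d) : ℂ) • liftedPtr d S M := by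
  ext x y
  simp only [liftedPtr_apply, Matrix.smul_apply, piecewise_piecewise_of_subset hST,
    Nat.cast_smul_eq_nsmul]
  exact sum_sum_piecewise T fun z => M (S.piecewise x z) (S.piecewise y z)

theorem liftedPtr_agreeMatrix_of_subset {T : Finset ι} (hST : S ⊆ T) :
    liftedPtr d S (agreeMatrix d T) = (Fintype.card (Cfg d) : ℂ) • agreeMatrix d S := by
  ext x y
  have agree_iff (z : Cfg d) :
      (∀ i ∈ T, S.piecewise x z i = S.piecewise y z i) ↔ ∀ i ∈ S, x i = y i := by
    refine ⟨fun h i hi => by simpa [hi] using h i (hST hi), fun h i _ => ?_⟩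
    by_cases hi : i ∈ S
    · simpa only [Finset.piecewise_eq_of_mem _ _ _ hi] using h i hi
    · simp only [Finset.piecewise_eq_of_notMem _ _ _ hi]
  simp only [liftedPtr_apply, agreeMatrix, Matrix.of_apply, agree_iff, Finset.sum_const,
    Finset.card_univ, Matrix.smul_apply, Nat.cast_smul_eq_nsmul]

theorem mixedOn_anti {T : Finset ι} (hST : S ⊆ T) : mixedOn d T ≤ mixedOn d S := by
  intro M hM
  rcases isEmpty_or_nonempty (Cfg d) with _ | _
  · rw [mem_mixedOn]
    exact Subsingleton.elim _ _
  rw [mem_mixedOn] at hM ⊢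
  have hcard : (Fintype.card (Cfg d) : ℂ) ≠ 0 := Nat.cast_ne_zero.2 Fintype.card_ne_zero
  refine smul_right_injective _ hcard ?_
  calc (Fintype.card (Cfg d) : ℂ) • liftedPtr d S M
      = liftedPtr d S (liftedPtr d T M) := (liftedPtr_liftedPtr_of_subset hST M).symm
    _ = (Fintype.card (Cfg d) : ℂ) • M.trace • agreeMatrix d S := by
      rw [hM, map_smul, liftedPtr_agreeMatrix_of_subset hST, smul_comm]

end Marginal

section Dyad

variable {ι : Type} {d : ι → ℕ}

theorem dyad_smul_smul (a b : ℂ) (u v : H d) :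
    dyad d (a • u) (b • v) = (a * conj b) • dyad d u v := by
  ext x y
  simp [dyad]
  ring

theorem four_smul_dyad (u v : H d) :
    (4 : ℂ) • dyad d u v = dyad d (u + v) (u + v) - dyad d (u - v) (u - v) +
      Complex.I • (dyad d (u + Complex.I • v) (u + Complex.I • v) -
        dyad d (u - Complex.I • v) (u - Complex.I • v)) := by
  ext x y
  simp only [dyad, Matrix.of_apply, Matrix.smul_apply, Matrix.add_apply, Matrix.sub_apply,
    Pi.add_apply, Pi.sub_apply, Pi.smul_apply, smul_eq_mul, map_add, map_sub, map_mul,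
    Complex.conj_I]
  linear_combination (2 * u x * conj (v y) - 2 * v x * conj (u y)) * Complex.I_mul_I

theorem trace_dyad [Fintype ι] [DecidableEq ι] (u v : H d) : (dyad d u v).trace = dotc d v u := by
  simp [Matrix.trace, dyad, dotc, mul_comm]

end Dyad

section UniformSubspace

variable {ι : Type} [Fintype ι] [DecidableEq ι] {d : ι → ℕ}

theorem dotc_self (w : H d) : dotc d w w = (‖WithLp.toLp 2 w‖ : ℂ) ^ 2 := by
  rw [← Complex.ofReal_pow, EuclideanSpace.norm_sq_eq]
  simp [dotc, Complex.conj_mul']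

theorem IsUniformSubspace.dyad_self_mem_mixedOn {r : ℕ} {W : Submodule ℂ (H d)}
    (hW : IsUniformSubspace d r W) {S : Finset ι} (hS : #S = r) {w : H d} (hw : w ∈ W) :
    dyad d w w ∈ mixedOn d S := by
  have unit_mem {w : H d} (hw : w ∈ W) (hunit : IsUnitVec d w) : dyad d w w ∈ mixedOn d S := by
    rw [mem_mixedOn_iff_ptr, trace_dyad, hunit, one_smul]
    exact hW w hw hunit S hS
  rcases eq_or_ne w 0 with rfl | hw0
  · rw [← zero_smul ℂ (0 : H d), dyad_smul_smul, zero_mul, zero_smul]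
    exact zero_mem _
  set N : ℂ := ((‖WithLp.toLp 2 w‖ : ℝ) : ℂ) with hN
  have hN0 : N ≠ 0 := by simpa [hN] using hw0
  have conj_N : conj N = N := Complex.conj_ofReal _
  have normalized_unit : IsUnitVec d (N⁻¹ • w) := by
    rw [IsUnitVec, ← trace_dyad, dyad_smul_smul, Matrix.trace_smul, trace_dyad, dotc_self, ← hN,
      map_inv₀, conj_N, smul_eq_mul]
    field_simp
  have dyad_eq : dyad d w w = (N * conj N) • dyad d (N⁻¹ • w) (N⁻¹ • w) := by
    rw [← dyad_smul_smul, smul_inv_smul₀ hN0]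
  rw [dyad_eq]
  exact Submodule.smul_mem _ _ (unit_mem (W.smul_mem _ hw) normalized_unit)

theorem IsUniformSubspace.dyad_mem_mixedOn {r : ℕ} {W : Submodule ℂ (H d)}
    (hW : IsUniformSubspace d r W) {S : Finset ι} (hS : #S = r) {u v : H d}
    (hu : u ∈ W) (hv : v ∈ W) : dyad d u v ∈ mixedOn d S := by
  have hIv := W.smul_mem Complex.I hv
  have self_mem {w : H d} (hw : w ∈ W) := hW.dyad_self_mem_mixedOn hS hw
  have four_smul_mem : (4 : ℂ) • dyad d u v ∈ mixedOn d S := by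
    rw [four_smul_dyad]
    exact add_mem (sub_mem (self_mem (add_mem hu hv)) (self_mem (sub_mem hu hv)))
      (Submodule.smul_mem _ _
        (sub_mem (self_mem (add_mem hu hIv)) (self_mem (sub_mem hu hIv))))
  exact ((mixedOn d S).smul_mem_iff (by norm_num : (4 : ℂ) ≠ 0)).1 four_smul_mem

end UniformSubspace

section Code

variable {ι : Type} [Fintype ι] [DecidableEq ι] {d : ι → ℕ}

theorem trace_dyad_col {κ : Type*} [DecidableEq κ] {V : Matrix (Cfg d) κ ℂ} {c : ℂ}
    (hV : Vᴴ * V = c • 1) (a b : κ) :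
    (dyad d (V.col a) (V.col b)).trace = if a = b then c else 0 := by
  calc (dyad d (V.col a) (V.col b)).trace = (Vᴴ * V) b a := by
        rw [trace_dyad]
        rfl
    _ = if a = b then c else 0 := by
        simp [hV, Matrix.one_apply, eq_comm]

/-- The code vectors, i.e. the columns of `V`, read as a matrix from the parties outside `S` to
the parties in `S` together with the logical index. -/
def cutMatrix {κ : Type*} (S : Finset ι) (V : Matrix (Cfg d) κ ℂ) :
    Matrix (κ × SubCfg d S) (CoCfg d S) ℂ :=
  Matrix.of fun p c => V (merge d S p.2 c) p.1

theorem cutMatrix_mul_conjTranspose {κ : Type*} [DecidableEq κ] {V : Matrix (Cfg d) κ ℂ}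
    (hV : Vᴴ * V = 1) {S : Finset ι} (hS : ∀ a b, dyad d (V.col a) (V.col b) ∈ mixedOn d S) :
    cutMatrix S V * (cutMatrix S V)ᴴ = (Fintype.card (SubCfg d S) : ℂ)⁻¹ • 1 := by
  ext ⟨a, s⟩ ⟨b, t⟩
  calc (cutMatrix S V * (cutMatrix S V)ᴴ) (a, s) (b, t)
      = ptr d S (dyad d (V.col a) (V.col b)) s t := rfl
    _ = ((Fintype.card (SubCfg d S) : ℂ)⁻¹ • (1 : Matrix (κ × SubCfg d S) _ ℂ)) (a, s) (b, t) := by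
      rw [mem_mixedOn_iff_ptr.1 (hS a b), trace_dyad_col (c := 1) (by rwa [one_smul]),
        unifMix_eq_inv_card_smul_one]
      simp only [Matrix.smul_apply, Matrix.one_apply, Prod.mk.injEq, ite_and, ite_smul,
        one_smul, zero_smul, smul_ite, smul_zero]
      split_ifs <;> rfl

theorem liftedPtr_compl_mul_conjTranspose_apply {κ : Type*} [Fintype κ] {S : Finset ι}
    (V : Matrix (Cfg d) κ ℂ) (x y : Cfg d) :
    liftedPtr d Sᶜ (V * Vᴴ) x y = Fintype.card (CoCfg d S) *
      ((cutMatrix S V)ᴴ * cutMatrix S V) (fun i => y i.1) (fun i => x i.1) := by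
  simp only [liftedPtr_apply, sum_cfg_eq_sum_merge S, compl_piecewise_merge, Finset.sum_const,
    Finset.card_univ, nsmul_eq_mul, ← Finset.mul_sum]
  congr 1
  simp only [Matrix.mul_apply, Fintype.sum_prod_type_right, Matrix.conjTranspose_apply, cutMatrix,
    Matrix.of_apply, mul_comm]

/- The cut matrix is square by `hcard`, so its rows being orthogonal makes its columns
orthogonal. -/
theorem mul_conjTranspose_mem_mixedOn_compl {κ : Type*} [Fintype κ] [DecidableEq κ]
    {V : Matrix (Cfg d) κ ℂ} (hV : Vᴴ * V = 1) {S : Finset ι}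
    (hS : ∀ a b, dyad d (V.col a) (V.col b) ∈ mixedOn d S)
    (hcard : Fintype.card κ * Fintype.card (SubCfg d S) = Fintype.card (CoCfg d S)) :
    V * Vᴴ ∈ mixedOn d Sᶜ := by
  have trace_eq : (V * Vᴴ).trace = Fintype.card κ := by
    rw [Matrix.trace_mul_comm, hV, Matrix.trace_one]
  rw [mem_mixedOn, trace_eq]
  ext x y
  have hne : (Fintype.card (SubCfg d S) : ℂ) ≠ 0 := Nat.cast_ne_zero.2 (card_subCfg_ne_zero S x)
  have columns_orthogonal : (cutMatrix S V)ᴴ * cutMatrix S V =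
      (Fintype.card (SubCfg d S) : ℂ)⁻¹ • 1 :=
    mul_eq_smul_one_comm (inv_ne_zero hne) (by rw [Fintype.card_prod, hcard])
      (cutMatrix_mul_conjTranspose hV hS)
  have agree_iff : (fun i => y i.1 : CoCfg d S) = (fun i => x i.1 : CoCfg d S) ↔
      ∀ i ∈ Sᶜ, x i = y i := by
    simp [funext_iff, eq_comm]
  rw [liftedPtr_compl_mul_conjTranspose_apply, columns_orthogonal, ← hcard]
  simp only [Matrix.smul_apply, Matrix.one_apply, agreeMatrix, Matrix.of_apply, agree_iff,
    Nat.cast_mul, smul_eq_mul, mul_assoc, mul_inv_cancel_left₀ hne]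

/-- `V` is an isometry from `ℂ^κ` onto an `r`-uniform subspace whose dimension attains the quantum
Singleton bound, i.e. an encoding of a QMDS code of distance `r + 1`. The bound is written in the
form `K * d_S = d_{Sᶜ}`, which for equal local dimensions `D` says `K = D ^ (n - 2 * r)`. -/
structure IsQMDSEncoding {κ : Type*} [Fintype κ] [DecidableEq κ] (d : ι → ℕ) (r : ℕ)
    (V : Matrix (Cfg d) κ ℂ) : Prop where
  isometry : Vᴴ * V = 1
  uniform : IsUniformSubspace d r (LinearMap.range V.mulVecLin)
  le_card : r ≤ Fintype.card ι
  singleton_eq : ∀ S : Finset ι, #S = r →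
    Fintype.card κ * Fintype.card (SubCfg d S) = Fintype.card (CoCfg d S)

namespace IsQMDSEncoding

variable {κ : Type*} [Fintype κ] [DecidableEq κ] {r : ℕ} {V : Matrix (Cfg d) κ ℂ}

theorem conjTranspose_mul_mul {κ' : Type*} (h : IsQMDSEncoding d r V) (φ : Matrix κ κ' ℂ) :
    (V * φ)ᴴ * (V * φ) = φᴴ * φ := by
  rw [Matrix.conjTranspose_mul, Matrix.mul_assoc, ← Matrix.mul_assoc Vᴴ, h.isometry,
    Matrix.one_mul]

theorem dyad_col_mul_mem_mixedOn {κ' : Type*} (h : IsQMDSEncoding d r V) {S : Finset ι}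
    (hS : #S ≤ r) (φ : Matrix κ κ' ℂ) (a b : κ') :
    dyad d ((V * φ).col a) ((V * φ).col b) ∈ mixedOn d S := by
  obtain ⟨T, hST, hT⟩ := Finset.exists_superset_card_eq hS h.le_card
  exact mixedOn_anti hST (h.uniform.dyad_mem_mixedOn hT ⟨φ.col a, rfl⟩ ⟨φ.col b, rfl⟩)

theorem dyad_col_mem_mixedOn (h : IsQMDSEncoding d r V) {S : Finset ι} (hS : #S ≤ r) (a b : κ) :
    dyad d (V.col a) (V.col b) ∈ mixedOn d S := by
  simpa only [Matrix.mul_one] using h.dyad_col_mul_mem_mixedOn hS 1 a b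

theorem mul_conjTranspose_mem_mixedOn (h : IsQMDSEncoding d r V) {S : Finset ι}
    (hS : #S ≤ Fintype.card ι - r) : V * Vᴴ ∈ mixedOn d S := by
  have hr : r ≤ #Sᶜ := by
    have := h.le_card
    rw [Finset.card_compl]
    omega
  obtain ⟨T, hTS, hT⟩ := Finset.exists_subset_card_eq hr
  exact mixedOn_anti (Finset.subset_compl_comm.1 hTS)
    (mul_conjTranspose_mem_mixedOn_compl h.isometry
      (fun a b => h.dyad_col_mem_mixedOn hT.le a b) (h.singleton_eq T hT))

theorem of_const {D : ℕ} {V : Matrix (Cfg fun _ : ι => D) κ ℂ} (hV : Vᴴ * V = 1)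
    (huniform : IsUniformSubspace (fun _ : ι => D) r (LinearMap.range V.mulVecLin))
    (hr : 2 * r ≤ Fintype.card ι) (hcard : Fintype.card κ = D ^ (Fintype.card ι - 2 * r)) :
    IsQMDSEncoding (fun _ : ι => D) r V where
  isometry := hV
  uniform := huniform
  le_card := by omega
  singleton_eq S hS := by
    have hexp : Fintype.card ι - 2 * r + r = Fintype.card ι - r := by omega
    simp [hcard, hS, ← pow_add, hexp]

end IsQMDSEncoding

end Code

section Bipartite

variable {ι₁ ι₂ : Type} {d₁ : ι₁ → ℕ} {d₂ : ι₂ → ℕ}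

/-- The configurations of a system composed of two parts are the pairs of configurations of the
parts. -/
def splitCfg : Cfg (Sum.elim d₁ d₂) ≃ Cfg d₁ × Cfg d₂ :=
  Equiv.sumPiEquivProdPi fun i => Fin (Sum.elim d₁ d₂ i)

theorem splitCfg_piecewise [DecidableEq ι₁] [DecidableEq ι₂] (S : Finset (ι₁ ⊕ ι₂))
    (x z : Cfg (Sum.elim d₁ d₂)) :
    splitCfg (S.piecewise x z) = (S.toLeft.piecewise (splitCfg x).1 (splitCfg z).1,
      S.toRight.piecewise (splitCfg x).2 (splitCfg z).2) := by
  refine Prod.ext (funext fun i => ?_) (funext fun i => ?_)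
  · exact if_congr Finset.mem_toLeft.symm rfl rfl
  · exact if_congr Finset.mem_toRight.symm rfl rfl

theorem splitCfg_agree_iff (S : Finset (ι₁ ⊕ ι₂)) (x y : Cfg (Sum.elim d₁ d₂)) :
    ((∀ i ∈ S.toLeft, (splitCfg x).1 i = (splitCfg y).1 i) ∧
      ∀ i ∈ S.toRight, (splitCfg x).2 i = (splitCfg y).2 i) ↔ ∀ i ∈ S, x i = y i := by
  simp only [Finset.mem_toLeft, Finset.mem_toRight, Sum.forall]
  rfl

/-- The vector of the composite system with coefficient matrix `A`, that is
`∑ A (x₁, x₂) |x₁⟩ ⊗ |x₂⟩`. -/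
def ofBipartite (A : Matrix (Cfg d₁) (Cfg d₂) ℂ) : H (Sum.elim d₁ d₂) :=
  fun x => A (splitCfg x).1 (splitCfg x).2

theorem ofBipartite_mul_mul_transpose_apply {κ₁ κ₂ : Type*} [Fintype κ₁] [Fintype κ₂]
    (V₁ : Matrix (Cfg d₁) κ₁ ℂ) (φ : Matrix κ₁ κ₂ ℂ) (V₂ : Matrix (Cfg d₂) κ₂ ℂ)
    (x : Cfg (Sum.elim d₁ d₂)) :
    ofBipartite (V₁ * φ * V₂ᵀ) x = ∑ a, ∑ b,
      V₁ (fun i => x (Sum.inl i)) a * V₂ (fun j => x (Sum.inr j)) b * φ a b := by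
  rw [Finset.sum_comm]
  simp only [ofBipartite, Matrix.mul_apply, Matrix.transpose_apply, Finset.sum_mul,
    mul_right_comm _ _ (φ _ _)]
  rfl

/-- The tensor product of operators on the two parts, as an operator on the composite system. -/
def tensorOp : Matrix (Cfg d₁) (Cfg d₁) ℂ →ₗ[ℂ] Matrix (Cfg d₂) (Cfg d₂) ℂ →ₗ[ℂ]
    Matrix (Cfg (Sum.elim d₁ d₂)) (Cfg (Sum.elim d₁ d₂)) ℂ :=
  (Matrix.kroneckerBilinear (R := ℂ)).compr₂
    (Matrix.reindexLinearEquiv ℂ ℂ splitCfg.symm splitCfg.symm).toLinearMap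

theorem tensorOp_apply (A : Matrix (Cfg d₁) (Cfg d₁) ℂ) (B : Matrix (Cfg d₂) (Cfg d₂) ℂ)
    (x y : Cfg (Sum.elim d₁ d₂)) :
    tensorOp A B x y =
      A (splitCfg x).1 (splitCfg y).1 * B (splitCfg x).2 (splitCfg y).2 := rfl

theorem dyad_ofBipartite_mul_transpose {κ : Type*} [Fintype κ] (U : Matrix (Cfg d₁) κ ℂ)
    (V : Matrix (Cfg d₂) κ ℂ) :
    dyad _ (ofBipartite (U * Vᵀ)) (ofBipartite (U * Vᵀ)) =
      ∑ p : κ × κ, tensorOp (dyad d₁ (U.col p.1) (U.col p.2))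
        (dyad d₂ (V.col p.1) (V.col p.2)) := by
  ext x y
  rw [Matrix.sum_apply]
  calc (∑ a, U (splitCfg x).1 a * V (splitCfg x).2 a) *
        conj (∑ b, U (splitCfg y).1 b * V (splitCfg y).2 b)
      = ∑ p : κ × κ, U (splitCfg x).1 p.1 * conj (U (splitCfg y).1 p.2) *
          (V (splitCfg x).2 p.1 * conj (V (splitCfg y).2 p.2)) := by
        simp only [map_sum, map_mul, Finset.sum_mul_sum, Fintype.sum_prod_type, mul_mul_mul_comm]
    _ = ∑ p : κ × κ, tensorOp (dyad d₁ (U.col p.1) (U.col p.2))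
          (dyad d₂ (V.col p.1) (V.col p.2)) x y := rfl

theorem sum_trace_dyad_smul_dyad [Fintype ι₁] [DecidableEq ι₁]
    {κ : Type*} [Fintype κ] [DecidableEq κ]
    {U : Matrix (Cfg d₁) κ ℂ} {c : ℂ} (hU : Uᴴ * U = c • 1) (V : Matrix (Cfg d₂) κ ℂ) :
    ∑ p : κ × κ, (dyad d₁ (U.col p.1) (U.col p.2)).trace • dyad d₂ (V.col p.1) (V.col p.2) =
      c • (V * Vᴴ) := by
  have projector_eq : V * Vᴴ = ∑ a, dyad d₂ (V.col a) (V.col a) := by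
    ext x y
    simp only [Matrix.mul_apply, Matrix.sum_apply]
    rfl
  simp only [trace_dyad_col hU, Fintype.sum_prod_type, ite_smul, zero_smul, Finset.sum_ite_eq,
    Finset.mem_univ, if_true, ← Finset.smul_sum, projector_eq]

variable [Fintype ι₁] [DecidableEq ι₁] [Fintype ι₂] [DecidableEq ι₂]

theorem sum_cfg_sumElim {M : Type*} [AddCommMonoid M] (f : Cfg d₁ × Cfg d₂ → M) :
    ∑ x : Cfg (Sum.elim d₁ d₂), f (splitCfg x) = ∑ x₁, ∑ x₂, f (x₁, x₂) := by
  rw [splitCfg.sum_comp, Fintype.sum_prod_type]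

theorem dotc_ofBipartite (A : Matrix (Cfg d₁) (Cfg d₂) ℂ) :
    dotc _ (ofBipartite A) (ofBipartite A) = (A * Aᴴ).trace := by
  simp only [Matrix.trace, Matrix.diag_apply, Matrix.mul_apply, Matrix.conjTranspose_apply,
    mul_comm (A _ _)]
  exact sum_cfg_sumElim fun x => conj (A x.1 x.2) * A x.1 x.2

theorem trace_tensorOp (A : Matrix (Cfg d₁) (Cfg d₁) ℂ) (B : Matrix (Cfg d₂) (Cfg d₂) ℂ) :
    (tensorOp A B).trace = A.trace * B.trace := by
  simp only [Matrix.trace, Matrix.diag_apply, tensorOp_apply, Finset.sum_mul_sum]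
  exact sum_cfg_sumElim fun x => A x.1 x.1 * B x.2 x.2

theorem liftedPtr_tensorOp (S : Finset (ι₁ ⊕ ι₂)) (A : Matrix (Cfg d₁) (Cfg d₁) ℂ)
    (B : Matrix (Cfg d₂) (Cfg d₂) ℂ) :
    liftedPtr _ S (tensorOp A B) =
      tensorOp (liftedPtr d₁ S.toLeft A) (liftedPtr d₂ S.toRight B) := by
  ext x y
  simp only [liftedPtr_apply, tensorOp_apply, splitCfg_piecewise, Finset.sum_mul_sum]
  exact sum_cfg_sumElim fun z => A (S.toLeft.piecewise (splitCfg x).1 z.1)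
    (S.toLeft.piecewise (splitCfg y).1 z.1) * B (S.toRight.piecewise (splitCfg x).2 z.2)
    (S.toRight.piecewise (splitCfg y).2 z.2)

theorem tensorOp_agreeMatrix (S : Finset (ι₁ ⊕ ι₂)) :
    tensorOp (agreeMatrix d₁ S.toLeft) (agreeMatrix d₂ S.toRight) =
      agreeMatrix (Sum.elim d₁ d₂) S := by
  ext x y
  simp only [tensorOp_apply, agreeMatrix, Matrix.of_apply, ite_zero_mul_ite_zero, one_mul,
    splitCfg_agree_iff]

theorem sum_tensorOp_mem_mixedOn_of_left {κ : Type*} [Fintype κ] {S : Finset (ι₁ ⊕ ι₂)}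
    {A : κ → Matrix (Cfg d₁) (Cfg d₁) ℂ} {B : κ → Matrix (Cfg d₂) (Cfg d₂) ℂ}
    (hA : ∀ i, A i ∈ mixedOn d₁ S.toLeft)
    (hB : ∑ i, (A i).trace • B i ∈ mixedOn d₂ S.toRight) :
    ∑ i, tensorOp (A i) (B i) ∈ mixedOn (Sum.elim d₁ d₂) S := by
  rw [mem_mixedOn] at hB ⊢
  calc liftedPtr _ S (∑ i, tensorOp (A i) (B i))
      = tensorOp (agreeMatrix d₁ S.toLeft)
          (liftedPtr d₂ S.toRight (∑ i, (A i).trace • B i)) := by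
        simp only [map_sum, map_smul, liftedPtr_tensorOp, mem_mixedOn.1 (hA _),
          LinearMap.smul_apply]
    _ = (∑ i, tensorOp (A i) (B i)).trace • agreeMatrix (Sum.elim d₁ d₂) S := by
        simp only [hB, map_smul, tensorOp_agreeMatrix, Matrix.trace_sum, Matrix.trace_smul,
          trace_tensorOp, smul_eq_mul]

theorem sum_tensorOp_mem_mixedOn_of_right {κ : Type*} [Fintype κ] {S : Finset (ι₁ ⊕ ι₂)}
    {A : κ → Matrix (Cfg d₁) (Cfg d₁) ℂ} {B : κ → Matrix (Cfg d₂) (Cfg d₂) ℂ}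
    (hB : ∀ i, B i ∈ mixedOn d₂ S.toRight)
    (hA : ∑ i, (B i).trace • A i ∈ mixedOn d₁ S.toLeft) :
    ∑ i, tensorOp (A i) (B i) ∈ mixedOn (Sum.elim d₁ d₂) S := by
  rw [mem_mixedOn] at hA ⊢
  calc liftedPtr _ S (∑ i, tensorOp (A i) (B i))
      = tensorOp (liftedPtr d₁ S.toLeft (∑ i, (B i).trace • A i))
          (agreeMatrix d₂ S.toRight) := by
        simp only [map_sum, map_smul, liftedPtr_tensorOp, mem_mixedOn.1 (hB _),
          LinearMap.smul_apply, LinearMap.sum_apply]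
    _ = (∑ i, tensorOp (A i) (B i)).trace • agreeMatrix (Sum.elim d₁ d₂) S := by
        simp only [hA, map_smul, LinearMap.smul_apply, tensorOp_agreeMatrix, Matrix.trace_sum,
          Matrix.trace_smul, trace_tensorOp, smul_eq_mul, mul_comm]

/- Only the diagonal dyads of `U` survive the trace over the first part, and they leave the
projector `V * Vᴴ` on the second. -/
theorem dyad_ofBipartite_mem_mixedOn_of_left {κ : Type*} [Fintype κ] [DecidableEq κ]
    {U : Matrix (Cfg d₁) κ ℂ} {V : Matrix (Cfg d₂) κ ℂ} {c : ℂ} (hU : Uᴴ * U = c • 1)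
    {S : Finset (ι₁ ⊕ ι₂)} (hleft : ∀ a b, dyad d₁ (U.col a) (U.col b) ∈ mixedOn d₁ S.toLeft)
    (hright : V * Vᴴ ∈ mixedOn d₂ S.toRight) :
    dyad _ (ofBipartite (U * Vᵀ)) (ofBipartite (U * Vᵀ)) ∈ mixedOn (Sum.elim d₁ d₂) S := by
  rw [dyad_ofBipartite_mul_transpose]
  refine sum_tensorOp_mem_mixedOn_of_left (fun p => hleft p.1 p.2) ?_
  rw [sum_trace_dyad_smul_dyad hU]
  exact Submodule.smul_mem _ _ hright

theorem dyad_ofBipartite_mem_mixedOn_of_right {κ : Type*} [Fintype κ] [DecidableEq κ]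
    {U : Matrix (Cfg d₁) κ ℂ} {V : Matrix (Cfg d₂) κ ℂ} {c : ℂ} (hV : Vᴴ * V = c • 1)
    {S : Finset (ι₁ ⊕ ι₂)} (hleft : U * Uᴴ ∈ mixedOn d₁ S.toLeft)
    (hright : ∀ a b, dyad d₂ (V.col a) (V.col b) ∈ mixedOn d₂ S.toRight) :
    dyad _ (ofBipartite (U * Vᵀ)) (ofBipartite (U * Vᵀ)) ∈ mixedOn (Sum.elim d₁ d₂) S := by
  rw [dyad_ofBipartite_mul_transpose]
  refine sum_tensorOp_mem_mixedOn_of_right (fun p => hright p.1 p.2) ?_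
  rw [sum_trace_dyad_smul_dyad hV]
  exact Submodule.smul_mem _ _ hleft

end Bipartite

section MaxEntangled

variable {κ : Type*} [Fintype κ] [DecidableEq κ]

/-- The vector of `ℂ^κ ⊗ ℂ^κ` with coefficient matrix `φ` is maximally entangled: the two products
are its reductions to the two factors, up to transposition. -/
def IsMaxEntangled (φ : Matrix κ κ ℂ) : Prop :=
  φ * φᴴ = (Fintype.card κ : ℂ)⁻¹ • 1 ∧ φᴴ * φ = (Fintype.card κ : ℂ)⁻¹ • 1

theorem IsMaxEntangled.transpose {φ : Matrix κ κ ℂ} (hφ : IsMaxEntangled φ) :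
    IsMaxEntangled φᵀ := by
  simp only [IsMaxEntangled, Matrix.conjTranspose_transpose_eq_transpose_conjTranspose,
    ← Matrix.transpose_mul, hφ.1, hφ.2, Matrix.transpose_smul, Matrix.transpose_one, and_self]

variable {ι₁ ι₂ : Type} [Fintype ι₁] [DecidableEq ι₁] [Fintype ι₂] [DecidableEq ι₂]
  {d₁ : ι₁ → ℕ} {d₂ : ι₂ → ℕ} {V₁ : Matrix (Cfg d₁) κ ℂ} {V₂ : Matrix (Cfg d₂) κ ℂ}
  {φ : Matrix κ κ ℂ}

theorem isUnitVec_ofBipartite [Nonempty κ] (hV₁ : V₁ᴴ * V₁ = 1) (hV₂ : V₂ᴴ * V₂ = 1)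
    (hφ : IsMaxEntangled φ) : IsUnitVec _ (ofBipartite (V₁ * φ * V₂ᵀ)) := by
  have hV₂' : V₂ᵀ * V₂ᵀᴴ = 1 := by
    rw [Matrix.conjTranspose_transpose_eq_transpose_conjTranspose, ← Matrix.transpose_mul, hV₂,
      Matrix.transpose_one]
  calc dotc _ (ofBipartite (V₁ * φ * V₂ᵀ)) (ofBipartite (V₁ * φ * V₂ᵀ))
      = (V₁ * (φ * (V₂ᵀ * V₂ᵀᴴ) * φᴴ) * V₁ᴴ).trace := by
        simp only [dotc_ofBipartite, Matrix.conjTranspose_mul, Matrix.mul_assoc]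
    _ = (φ * φᴴ).trace := by
        rw [hV₂', Matrix.mul_one, Matrix.trace_mul_comm, ← Matrix.mul_assoc, hV₁, Matrix.one_mul]
    _ = 1 := by
        rw [hφ.1, Matrix.trace_smul, Matrix.trace_one, smul_eq_mul, inv_mul_cancel₀]
        exact Nat.cast_ne_zero.2 Fintype.card_ne_zero

theorem dyad_ofBipartite_mem_mixedOn {r₁ r₂ : ℕ} (h₁ : IsQMDSEncoding d₁ r₁ V₁)
    (h₂ : IsQMDSEncoding d₂ r₂ V₂) (hφ : IsMaxEntangled φ) {S : Finset (ι₁ ⊕ ι₂)}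
    (hS₁ : #S ≤ Fintype.card ι₁ - r₁) (hS₂ : #S ≤ Fintype.card ι₂ - r₂)
    (hS : #S ≤ r₁ + r₂ + 1) :
    dyad _ (ofBipartite (V₁ * φ * V₂ᵀ)) (ofBipartite (V₁ * φ * V₂ᵀ)) ∈
      mixedOn (Sum.elim d₁ d₂) S := by
  have hcard := S.card_toLeft_add_card_toRight
  obtain hleft | hright : #S.toLeft ≤ r₁ ∨ #S.toRight ≤ r₂ := by omega
  · have hU : (V₁ * φ)ᴴ * (V₁ * φ) = (Fintype.card κ : ℂ)⁻¹ • 1 := by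
      rw [h₁.conjTranspose_mul_mul, hφ.2]
    exact dyad_ofBipartite_mem_mixedOn_of_left hU
      (fun a b => h₁.dyad_col_mul_mem_mixedOn hleft φ a b)
      (h₂.mul_conjTranspose_mem_mixedOn (S.card_toRight_le.trans hS₂))
  · have hV : (V₂ * φᵀ)ᴴ * (V₂ * φᵀ) = (Fintype.card κ : ℂ)⁻¹ • 1 := by
      rw [h₂.conjTranspose_mul_mul, hφ.transpose.2]
    have move_φ : V₁ * φ * V₂ᵀ = V₁ * (V₂ * φᵀ)ᵀ := by
      rw [Matrix.transpose_mul, Matrix.transpose_transpose, Matrix.mul_assoc]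
    rw [move_φ]
    exact dyad_ofBipartite_mem_mixedOn_of_right hV
      (h₁.mul_conjTranspose_mem_mixedOn (S.card_toLeft_le.trans hS₁))
      (fun a b => h₂.dyad_col_mul_mem_mixedOn hright φᵀ a b)

end MaxEntangled

end RUnif

open RUnif in
theorem statement7_general {ι₁ ι₂ : Type} {κ : Type*} [Fintype ι₁] [DecidableEq ι₁] [Fintype ι₂]
    [DecidableEq ι₂] [Fintype κ] [DecidableEq κ] [Nonempty κ] {d₁ : ι₁ → ℕ} {d₂ : ι₂ → ℕ}
    {r₁ r₂ : ℕ} {V₁ : Matrix (Cfg d₁) κ ℂ} {V₂ : Matrix (Cfg d₂) κ ℂ} {φ : Matrix κ κ ℂ}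
    (h₁ : IsQMDSEncoding d₁ r₁ V₁) (h₂ : IsQMDSEncoding d₂ r₂ V₂) (hφ : IsMaxEntangled φ) :
    IsUnitVec (Sum.elim d₁ d₂) (ofBipartite (V₁ * φ * V₂ᵀ)) ∧
      IsUniform (Sum.elim d₁ d₂)
        (min (Fintype.card ι₁ - r₁) (min (Fintype.card ι₂ - r₂) (r₁ + r₂ + 1)))
        (ofBipartite (V₁ * φ * V₂ᵀ)) := by
  have hunit := isUnitVec_ofBipartite h₁.isometry h₂.isometry hφ
  refine ⟨hunit, fun S hS => ?_⟩
  obtain ⟨hS₁, hS₂, hS₁₂⟩ : #S ≤ Fintype.card ι₁ - r₁ ∧ #S ≤ Fintype.card ι₂ - r₂ ∧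
      #S ≤ r₁ + r₂ + 1 := by omega
  have hmixed := dyad_ofBipartite_mem_mixedOn h₁ h₂ hφ hS₁ hS₂ hS₁₂
  rwa [mem_mixedOn_iff_ptr, trace_dyad, hunit, one_smul] at hmixed

open RUnif in
/-- Given two QMDS codes `((n₁, K, d₁))_{D₁}` and `((n₂, K, d₂))_{D₂}`
(`K > 1`, `rᵢ = dᵢ - 1`), isometries `V₁, V₂` from `ℂ^K` onto their code spaces, and a
maximally entangled `φ ∈ ℂ^K ⊗ ℂ^K`, the vector `(V₁ ⊗ V₂)φ` is an `l`-uniform unit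
vector of the `(n₁+n₂)`-partite system with `l = min(n₁-r₁, n₂-r₂, r₁+r₂+1)`. -/
theorem statement7 (n1 n2 D1 D2 r1 r2 K : ℕ)
    (hQ1 : K = D1 ^ (n1 - 2 * r1)) (h1 : 2 * r1 ≤ n1)
    (hQ2 : K = D2 ^ (n2 - 2 * r2)) (h2 : 2 * r2 ≤ n2)
    (hK : 1 < K)
    (W1 : Submodule ℂ (H (fun _ : Fin n1 => D1)))
    (hW1 : IsUniformSubspace (fun _ : Fin n1 => D1) r1 W1)
    (hdim1 : Module.finrank ℂ W1 = K)
    (W2 : Submodule ℂ (H (fun _ : Fin n2 => D2)))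
    (hW2 : IsUniformSubspace (fun _ : Fin n2 => D2) r2 W2)
    (hdim2 : Module.finrank ℂ W2 = K)
    (V1 : Matrix (Cfg (fun _ : Fin n1 => D1)) (Fin K) ℂ)
    (hV1 : V1ᴴ * V1 = 1) (hran1 : LinearMap.range V1.mulVecLin = W1)
    (V2 : Matrix (Cfg (fun _ : Fin n2 => D2)) (Fin K) ℂ)
    (hV2 : V2ᴴ * V2 = 1) (hran2 : LinearMap.range V2.mulVecLin = W2)
    (φ : Matrix (Fin K) (Fin K) ℂ)
    (hφ1 : φ * φᴴ = ((K : ℂ))⁻¹ • 1) (hφ2 : φᴴ * φ = ((K : ℂ))⁻¹ • 1) :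
    ∀ χ : H (Sum.elim (fun _ : Fin n1 => D1) (fun _ : Fin n2 => D2)),
      χ = (fun x => ∑ a : Fin K, ∑ b : Fin K,
        V1 (fun i => x (Sum.inl i)) a * V2 (fun j => x (Sum.inr j)) b * φ a b) →
      IsUnitVec (Sum.elim (fun _ : Fin n1 => D1) (fun _ : Fin n2 => D2)) χ ∧
      IsUniform (Sum.elim (fun _ : Fin n1 => D1) (fun _ : Fin n2 => D2))
        (min (n1 - r1) (min (n2 - r2) (r1 + r2 + 1))) χ := by
  rintro χ rfl
  subst hran1 hran2
  have : NeZero K := ⟨by omega⟩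
  have hφ : IsMaxEntangled φ := by simpa only [IsMaxEntangled, Fintype.card_fin] using ⟨hφ1, hφ2⟩
  have key := statement7_general (.of_const hV1 hW1 (by simpa) (by simpa))
    (.of_const hV2 hW2 (by simpa) (by simpa)) hφ
  simpa only [Fintype.card_fin, funext (ofBipartite_mul_mul_transpose_apply V1 φ V2)] using key
end

section
/- There exists a 2-uniform unit vector in the 6-partite space C^2 ⊗ (C^3)^{⊗5}, i.e., a unit vector ψ ∈ C^2 ⊗ C^3 ⊗ C^3 ⊗ C^3 ⊗ C^3 ⊗ C^3 all of whose reductions to any 2 of the 6 parties are maximally mixed. -/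
/-!
Common definitions: multipartite systems with parties indexed by a finite type `ι`,
local dimensions `d : ι → ℕ`, vectors as functions on the configuration space,
partial traces, and `r`-uniform states and subspaces.
-/

open scoped ComplexConjugate Matrix

/-!
The witness is a graph state: the vector with amplitudes `χ (∑ zᵢ zⱼ)`, summed over the edges `ij`
of a graph, where `χ` is a primitive character of a ring `R` and `zᵢ ∈ R` labels the level of party
`i`. A party may have fewer levels than `R` has elements; it then uses only some of the labels.

Let `a ≠ b` be configurations of the parties in `S`, and `w` the difference of their labels.
Shifting the label of a party `j ∉ S` that uses all of `R` permutes the terms of the `(a, b)` entry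
of the reduction to `S`; if the sum of `w` over the neighbours of `j` is nonzero, a suitable shift
also multiplies all these terms by one number other than `1`, so the entry vanishes. In the wheel
with five spokes, with the small party at the hub, such a `j` exists on the rim for every
`S = {u, v}`: if `w u` and `w v` are both nonzero, take `j` adjacent to exactly one of `u` and `v`,
and otherwise adjacent to the one where `w` is nonzero.
-/

open Function QuadraticMap

namespace RUnif

variable {ι : Type} {d : ι → ℕ}

section PhaseVec

variable [Fintype ι]

/-- The normalised vector all of whose amplitudes have the same modulus, with phases `θ`. -/
noncomputable def phaseVec (θ : Cfg d → Circle) : H d :=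
  fun x => ((√(∏ i, d i : ℝ))⁻¹ : ℝ) * (θ x : ℂ)

lemma dyad_phaseVec_apply (θ : Cfg d → Circle) (x y : Cfg d) :
    dyad d (phaseVec θ) (phaseVec θ) x y = (∏ i, (d i : ℂ))⁻¹ * (θ x / θ y : Circle) := by
  have hsq : (((√(∏ i, d i : ℝ))⁻¹ : ℝ) : ℂ) * ((√(∏ i, d i : ℝ))⁻¹ : ℝ) =
      (∏ i, (d i : ℂ))⁻¹ := by
    rw [← Complex.ofReal_mul, ← mul_inv, Real.mul_self_sqrt (by positivity)]
    push_cast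
    rfl
  rw [dyad, Matrix.of_apply, phaseVec, phaseVec, map_mul, Complex.conj_ofReal, mul_mul_mul_comm,
    hsq, ← Circle.coe_inv_eq_conj, ← Circle.coe_mul, div_eq_mul_inv]

lemma isUnitVec_phaseVec [DecidableEq ι] [∀ i, NeZero (d i)] (θ : Cfg d → Circle) :
    IsUnitVec d (phaseVec θ) := by
  have hterm (x : Cfg d) : conj (phaseVec θ x) * phaseVec θ x = (∏ i, (d i : ℂ))⁻¹ := by
    simpa [dyad, mul_comm] using dyad_phaseVec_apply θ x x
  have hd : ∏ i, (d i : ℂ) ≠ 0 := Finset.prod_ne_zero_iff.2 fun i _ => NeZero.ne _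
  simp [IsUnitVec, dotc, hterm, hd]

lemma isUniform_phaseVec [DecidableEq ι] [∀ i, NeZero (d i)] {θ : Cfg d → Circle} {r : ℕ}
    (h : ∀ S : Finset ι, S.card = r → ∀ a b : SubCfg d S, a ≠ b →
      ∑ c : CoCfg d S, ((θ (merge d S a c) / θ (merge d S b c) : Circle) : ℂ) = 0) :
    IsUniform d r (phaseVec θ) := by
  intro S hS
  ext a b
  simp only [ptr, unifMix, Matrix.of_apply, Matrix.smul_apply, smul_eq_mul, dyad_phaseVec_apply,
    ← Finset.mul_sum]
  obtain rfl | hab := eq_or_ne a b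
  · have hsplit : (∏ i : S, (d i : ℂ)) * ∏ i : {i // i ∉ S}, (d i : ℂ) = ∏ i, (d i : ℂ) := by
      convert Fintype.prod_subtype_mul_prod_subtype (· ∈ S) fun i => (d i : ℂ)
    have hco : ∏ i : {i // i ∉ S}, (d i : ℂ) ≠ 0 :=
      Finset.prod_ne_zero_iff.2 fun i _ => NeZero.ne _
    simp only [div_self', Circle.coe_one, ← hsplit, mul_inv, mul_one, Finset.sum_const,
      Finset.card_univ, Fintype.card_pi, Fintype.card_fin, nsmul_eq_mul, Nat.cast_prod,
      Matrix.one_apply_eq]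
    field_simp
  · rw [h S hS a b hab, Matrix.one_apply_ne hab, mul_zero, mul_zero]

end PhaseVec

section QuadraticPhase

variable [DecidableEq ι] {R : Type*} [CommRing R] {e : ∀ i, Fin (d i) → R} {S : Finset ι}

lemma exists_perm_map_merge_eq_add_single {j : ι} (hjS : j ∉ S) (hj : Bijective (e j)) (t : R) :
    ∃ σ : Equiv.Perm (CoCfg d S), ∀ (a : SubCfg d S) (c : CoCfg d S),
      Pi.map e (merge d S a (σ c)) = Pi.map e (merge d S a c) + Pi.single j t := by
  let shift : Equiv.Perm (Fin (d j)) :=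
    (Equiv.ofBijective (e j) hj).permCongr.symm (Equiv.addRight t)
  have e_shift (s : Fin (d j)) : e j (shift s) = e j s + t :=
    Equiv.ofBijective_apply_symm_apply (e j) hj _
  refine ⟨Equiv.piCongrRight (update (fun _ => Equiv.refl _) ⟨j, hjS⟩ shift), fun a c => ?_⟩
  ext i
  obtain rfl | hij := eq_or_ne i j
  · simp [merge, hjS, e_shift]
  · by_cases hiS : i ∈ S <;> simp [merge, hiS, hij]

lemma apply_add_single_sub_apply_add_single (Q : QuadraticForm R (ι → R)) (x y : ι → R) (j : ι)
    (t : R) :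
    Q (x + Pi.single j t) - Q (y + Pi.single j t) =
      t * polar Q (x - y) (Pi.single j 1) + (Q x - Q y) := by
  have hsingle : (Pi.single j t : ι → R) = t • Pi.single j 1 := by simp [← Pi.single_smul]
  rw [← smul_eq_mul, ← polar_smul_right, ← hsingle, polar_sub_left, polar, polar]
  ring

lemma sum_quadraticPhase_eq_zero [Fintype ι] {χ : AddChar R Circle} (hχ : χ.IsPrimitive)
    (Q : QuadraticForm R (ι → R)) {j : ι} (hjS : j ∉ S) (hj : Bijective (e j)) {w : ι → R}
    (hw : polar Q w (Pi.single j 1) ≠ 0) {a b : SubCfg d S}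
    (hab : ∀ c, Pi.map e (merge d S a c) - Pi.map e (merge d S b c) = w) :
    ∑ c : CoCfg d S, ((χ (Q (Pi.map e (merge d S a c))) / χ (Q (Pi.map e (merge d S b c))) :
      Circle) : ℂ) = 0 := by
  obtain ⟨t, ht⟩ := AddChar.ne_one_iff.1 (hχ hw)
  rw [AddChar.mulShift_apply, mul_comm] at ht
  obtain ⟨σ, hσ⟩ := exists_perm_map_merge_eq_add_single hjS hj t
  refine eq_zero_of_mul_eq_self_left (b := (χ (t * polar Q w (Pi.single j 1)) : ℂ))
    (by simpa only [ne_eq, Circle.coe_eq_one] using ht) ?_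
  rw [Finset.mul_sum]
  refine Fintype.sum_equiv σ _ _ fun c => ?_
  rw [hσ, hσ, ← AddChar.map_sub_eq_div, ← AddChar.map_sub_eq_div,
    apply_add_single_sub_apply_add_single, hab, AddChar.map_add_eq_mul, Circle.coe_mul]

theorem isUniform_quadraticPhaseVec [Fintype ι] [∀ i, NeZero (d i)]
    {χ : AddChar R Circle} (hχ : χ.IsPrimitive) (Q : QuadraticForm R (ι → R))
    (he : ∀ i, Injective (e i)) {r : ℕ}
    (h : ∀ S : Finset ι, S.card = r → ∀ w : ι → R, w ≠ 0 → (∀ i ∉ S, w i = 0) →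
      ∃ j ∉ S, Surjective (e j) ∧ polar Q w (Pi.single j 1) ≠ 0) :
    IsUniform d r (phaseVec fun x => χ (Q (Pi.map e x))) := by
  refine isUniform_phaseVec fun S hS a b hab => ?_
  let w : ι → R := fun i => if hi : i ∈ S then e i (a ⟨i, hi⟩) - e i (b ⟨i, hi⟩) else 0
  have hw_ne : w ≠ 0 := by
    obtain ⟨⟨i, hi⟩, hne⟩ := ne_iff.1 hab
    exact ne_iff.2 ⟨i, by simpa [w, hi, sub_eq_zero] using (he i).ne hne⟩
  have hw_supp : ∀ i ∉ S, w i = 0 := fun i hi => dif_neg hi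
  have hw_sub (c : CoCfg d S) : Pi.map e (merge d S a c) - Pi.map e (merge d S b c) = w := by
    ext i
    by_cases hi : i ∈ S <;> simp [w, merge, hi]
  obtain ⟨j, hjS, hj, hpolar⟩ := h S hS w hw_ne hw_supp
  exact sum_quadraticPhase_eq_zero hχ Q hjS ⟨he j, hj⟩ hpolar hw_sub

end QuadraticPhase

section GraphForm

variable (R : Type*) [CommRing R]

/-- The monomial `zᵢ zⱼ` attached to an unordered pair `ij`. -/
def edgeForm : Sym2 ι → QuadraticForm R (ι → R) :=
  Sym2.lift ⟨fun i j => proj i j, fun i j => by ext; simp [mul_comm]⟩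

lemma polar_edgeForm_mk (i j : ι) (x y : ι → R) :
    polar (edgeForm R s(i, j)) x y = x i * y j + y i * x j := by
  simp only [edgeForm, Sym2.lift_mk, polar, proj_apply, Pi.add_apply]
  ring

variable [Fintype ι] [DecidableEq ι] (G : SimpleGraph ι) [DecidableRel G.Adj]

/-- The quadratic form `∑ zᵢ zⱼ` of a graph, summed over its (unordered) edges `ij`; unlike half the
quadratic form of the adjacency matrix, it makes sense in characteristic two. -/
def graphForm : QuadraticForm R (ι → R) :=
  ∑ p ∈ G.edgeFinset, edgeForm R p

lemma polar_graphForm_single_one (z : ι → R) (j : ι) :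
    polar (graphForm R G) z (Pi.single j 1) = ∑ i ∈ G.neighborFinset j, z i := by
  have hpolar : polar (graphForm R G) z (Pi.single j 1) =
      ∑ p ∈ G.edgeFinset, polar (edgeForm R p) z (Pi.single j 1) := by
    simp only [polar, graphForm, sum_apply, Finset.sum_sub_distrib]
  rw [hpolar]
  symm
  refine Finset.sum_of_injOn (fun i => s(j, i)) (fun i _ k _ => Sym2.congr_right.1)
    (fun i hi => by simpa using hi) ?_ fun i hi => ?_
  · intro p hp hpj
    induction p with | _ i k => ?_
    have hij : i ≠ j := by
      rintro rfl
      exact hpj ⟨k, by simpa using hp, rfl⟩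
    have hkj : k ≠ j := by
      rintro rfl
      exact hpj ⟨i, by simpa [G.adj_comm] using hp, Sym2.eq_swap⟩
    simp [polar_edgeForm_mk, hij, hkj]
  · have hij : i ≠ j := by
      rintro rfl
      simp at hi
    simp [polar_edgeForm_mk, hij]

variable {R G}

lemma polar_graphForm_single_one_of_support_pair {u v : ι} (huv : u ≠ v) {w : ι → R}
    (hw : ∀ i ∉ ({u, v} : Finset ι), w i = 0) (j : ι) :
    polar (graphForm R G) w (Pi.single j 1) =
      (if G.Adj j u then w u else 0) + if G.Adj j v then w v else 0 := by
  rw [polar_graphForm_single_one, G.neighborFinset_eq_filter, Finset.sum_filter,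
    ← Finset.sum_pair (f := fun i => if G.Adj j i then w i else 0) huv]
  exact (Finset.sum_subset (Finset.subset_univ _) fun i _ hi => by simp [hw i hi]).symm

end GraphForm

section GraphVec

variable [Fintype ι] [DecidableEq ι] {R : Type*} [CommRing R]

/-- The graph state of `G` with phases given by the character `χ`, where `e i` labels the levels of
party `i` by elements of `R`. -/
noncomputable def graphVec (G : SimpleGraph ι) [DecidableRel G.Adj] (χ : AddChar R Circle)
    (e : ∀ i, Fin (d i) → R) : H d :=
  phaseVec fun x => χ (graphForm R G (Pi.map e x))

theorem isUniform_two_graphVec [∀ i, NeZero (d i)] {G : SimpleGraph ι} [DecidableRel G.Adj]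
    {χ : AddChar R Circle} (hχ : χ.IsPrimitive) {e : ∀ i, Fin (d i) → R} (he : ∀ i, Injective (e i))
    (hadj : ∀ u v, u ≠ v → ∃ j, j ≠ v ∧ Surjective (e j) ∧ G.Adj j u)
    (hsep : ∀ u v, u ≠ v → ∃ j, j ≠ u ∧ j ≠ v ∧ Surjective (e j) ∧ ¬(G.Adj j u ↔ G.Adj j v)) :
    IsUniform d 2 (graphVec G χ e) := by
  refine isUniform_quadraticPhaseVec hχ _ he fun S hS w hw hsupp => ?_
  obtain ⟨u, v, huv, rfl⟩ := Finset.card_eq_two.1 hS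
  simp only [polar_graphForm_single_one_of_support_pair huv hsupp, Finset.mem_insert,
    Finset.mem_singleton, not_or]
  by_cases hu : w u = 0
  · have hv : w v ≠ 0 := by
      refine fun hv => hw (funext fun i => ?_)
      by_cases hi : i ∈ ({u, v} : Finset ι)
      · obtain rfl | rfl : i = u ∨ i = v := by simpa using hi
        exacts [hu, hv]
      · exact hsupp i hi
    obtain ⟨j, hju, hj, hjv⟩ := hadj v u huv.symm
    exact ⟨j, ⟨hju, hjv.ne⟩, hj, by simp [hu, hv, hjv]⟩
  by_cases hv : w v = 0
  · obtain ⟨j, hjv, hj, hju⟩ := hadj u v huv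
    exact ⟨j, ⟨hju.ne, hjv⟩, hj, by simp [hu, hv, hju]⟩
  obtain ⟨j, hju, hjv, hj, hne⟩ := hsep u v huv
  refine ⟨j, ⟨hju, hjv⟩, hj, ?_⟩
  by_cases hadj_u : G.Adj j u <;> simp_all

end GraphVec

section Wheel

/-- The wheel with hub `0` and rim the cycle `1, 2, 3, 4, 5`; the rim edge joining `5` to `1` is
listed separately because `5 + 1` is the hub in `Fin 6`. -/
def wheel : SimpleGraph (Fin 6) :=
  SimpleGraph.fromRel fun i j => i = 0 ∨ j = i + 1 ∨ (i = 5 ∧ j = 1)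

instance : DecidableRel wheel.Adj :=
  inferInstanceAs (DecidableRel (SimpleGraph.fromRel _).Adj)

lemma wheel_exists_rim_neighbor :
    ∀ u v : Fin 6, u ≠ v → ∃ j, j ≠ v ∧ j ≠ 0 ∧ wheel.Adj j u := by
  decide

lemma wheel_exists_rim_not_adj_iff_adj :
    ∀ u v : Fin 6, u ≠ v → ∃ j, j ≠ u ∧ j ≠ v ∧ j ≠ 0 ∧ ¬(wheel.Adj j u ↔ wheel.Adj j v) := by
  decide

end Wheel

lemma injective_natCast_val {k n : ℕ} (hkn : k ≤ n) :
    Injective fun t : Fin k => ((t : ℕ) : ZMod n) := by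
  intro s t hst
  have hval := congrArg ZMod.val hst
  rw [ZMod.val_natCast_of_lt (s.2.trans_le hkn), ZMod.val_natCast_of_lt (t.2.trans_le hkn)] at hval
  exact Fin.ext hval

lemma surjective_natCast_val {k n : ℕ} [NeZero n] (hnk : n ≤ k) :
    Surjective fun t : Fin k => ((t : ℕ) : ZMod n) :=
  fun z => ⟨⟨z.val, z.val_lt.trans_le hnk⟩, z.natCast_zmod_val⟩

lemma isPrimitive_toCircle (n : ℕ) [NeZero n] : (ZMod.toCircle (N := n)).IsPrimitive := by
  intro a ha
  refine AddChar.ne_one_iff.2 ⟨1, fun h => ha (ZMod.injective_toCircle ?_)⟩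
  simpa using h

end RUnif

open RUnif in
theorem statement13_general {m n : ℕ} (hm : 0 < m) (hmn : m ≤ n) :
    ∃ ψ : H ![m, n, n, n, n, n],
      IsUnitVec ![m, n, n, n, n, n] ψ ∧ IsUniform ![m, n, n, n, n, n] 2 ψ := by
  have : NeZero m := ⟨hm.ne'⟩
  have : NeZero n := ⟨(hm.trans_le hmn).ne'⟩
  have (i : Fin 6) : NeZero (![m, n, n, n, n, n] i) := by fin_cases i <;> assumption
  have hle (i : Fin 6) : ![m, n, n, n, n, n] i ≤ n := by fin_cases i <;> simp [hmn]
  have hrim {i : Fin 6} (hi : i ≠ 0) : n ≤ ![m, n, n, n, n, n] i := by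
    fin_cases i <;> simp_all
  refine ⟨graphVec wheel (ZMod.toCircle (N := n)) fun _ t => (t : ℕ), isUnitVec_phaseVec _,
    isUniform_two_graphVec (isPrimitive_toCircle n) (fun i => injective_natCast_val (hle i))
      (fun u v huv => ?_) fun u v huv => ?_⟩
  · obtain ⟨j, hjv, hj, hadj⟩ := wheel_exists_rim_neighbor u v huv
    exact ⟨j, hjv, surjective_natCast_val (hrim hj), hadj⟩
  · obtain ⟨j, hju, hjv, hj, hsep⟩ := wheel_exists_rim_not_adj_iff_adj u v huv
    exact ⟨j, hju, hjv, surjective_natCast_val (hrim hj), hsep⟩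

open RUnif in
/-- There exists a 2-uniform unit vector in `ℂ² ⊗ (ℂ³)^{⊗5}`. -/
theorem statement13 :
    ∃ ψ : H ![2, 3, 3, 3, 3, 3],
      IsUnitVec ![2, 3, 3, 3, 3, 3] ψ ∧ IsUniform ![2, 3, 3, 3, 3, 3] 2 ψ :=
  statement13_general two_pos (Nat.le_succ 2)
end
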